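/- For any A, P > 0, with A₁ = √(A² + P ln(1+P)), the amplitude-constrained AWGN capacity satisfies the non-asymptotic converse bound: (1/2) ln(1+P) − C(A,P) ≥ 8 · ( (√(1+P) − 1) · ln(1+P) / (A + A₁) )² · φ( √(1+P)·A₁/P + A/P )², where φ(y) = e^{−y²/2}/√(2π) is the standard normal density. -/

import Mathlib

open MeasureTheory ProbabilityTheory

open scoped Classical in
/-- Kullback–Leibler divergence (natural logarithm), valued in `EReal`:
`D(μ‖ν) = ∫ log(dμ/dν) dμ` if `μ ≪ ν` and the log-likelihood ratio is integrable,
and `+∞` otherwise. -/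
noncomputable def klDiv {α : Type*} [MeasurableSpace α] (μ ν : Measure α) : EReal :=
  if μ ≪ ν ∧ Integrable (llr μ ν) μ then ((∫ x, llr μ ν x ∂μ : ℝ) : EReal) else ⊤

/-- The joint law of `(X, X+Z)` where `X ~ μ` and `Z ~ N(0,1)` is independent of `X`. -/
noncomputable def jointLaw (μ : Measure ℝ) : Measure (ℝ × ℝ) :=
  (μ.prod (gaussianReal 0 1)).map fun p => (p.1, p.1 + p.2)

/-- The mutual information `I(X; X+Z)` for `X ~ μ` and `Z ~ N(0,1)` independent of `X`:
the KL divergence between the joint law of `(X, X+Z)` and the product of its marginals. -/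
noncomputable def mutInfo (μ : Measure ℝ) : EReal :=
  klDiv (jointLaw μ) ((jointLaw μ).fst.prod (jointLaw μ).snd)

/-- The amplitude-constrained AWGN capacity `C(A,P)`: the supremum of `I(X; X+Z)` over laws of
real random variables `X` with `|X| ≤ A` almost surely and `E[X²] ≤ P`, with `Z ~ N(0,1)`
independent of `X`. -/
noncomputable def CAP (A P : ℝ) : EReal :=
  ⨆ μ ∈ {μ : Measure ℝ | IsProbabilityMeasure μ ∧ μ {x | A < |x|} = 0 ∧ ∫ x, x ^ 2 ∂μ ≤ P},
    mutInfo μ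

/-- The standard normal density `φ(y) = e^{-y²/2}/√(2π)`. -/
noncomputable def stdPhi (y : ℝ) : ℝ := Real.exp (-(y ^ 2) / 2) / Real.sqrt (2 * Real.pi)

/-!
Write `Y = X + Z` and let `G` be the law `N(0, 1 + P)` of the unconstrained optimal output. The
identity `I(X; Y) + D(P_Y ‖ G) = E[D(N(X, 1) ‖ G)] ≤ ½ ln(1 + P)` bounds the capacity gap from below
by `D(P_Y ‖ G)`, and Pinsker's inequality on the event `|Y| ≤ t + A` by `2 (P_Y - G)²` there. Since
`|X| ≤ A`, this event contains `|Z| ≤ t`, whereas under `G` it has the standard Gaussian mass of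
`[-s, s]` with `√(1 + P) s = t + A`. The two masses differ by at least `2 (t - s) φ(t)`, and the
theorem is the case of the `t` for which their difference is largest.
-/

open InformationTheory hiding klDiv
open Set
open Real (exp log)
open scoped ENNReal NNReal

section KullbackLeibler

variable {α β : Type*} [MeasurableSpace α] [MeasurableSpace β]

lemma klDiv_eq_coe_klDiv {μ ν : Measure α} [IsFiniteMeasure μ] [IsFiniteMeasure ν]
    (h_univ : μ univ = ν univ) :
    klDiv μ ν = ((InformationTheory.klDiv μ ν : ℝ≥0∞) : EReal) := by
  rw [klDiv]
  split_ifs with h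
  · rw [← ENNReal.ofReal_toReal (klDiv_ne_top h.1 h.2), EReal.coe_ennreal_ofReal,
      max_eq_left ENNReal.toReal_nonneg, toReal_klDiv_of_measure_eq h.1 h_univ]
  · rw [klDiv_eq_top_iff.2 (not_and.1 h), EReal.coe_ennreal_top]

lemma klDiv_map_measurableEquiv (μ ν : Measure α) [IsFiniteMeasure μ] [IsFiniteMeasure ν]
    (e : α ≃ᵐ β) :
    InformationTheory.klDiv (μ.map e) (ν.map e) = InformationTheory.klDiv μ ν := by
  refine le_antisymm (klDiv_map_le μ ν e.measurable) ?_
  simpa only [MeasurableEquiv.map_symm_map] using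
    klDiv_map_le (μ.map e) (ν.map e) e.symm.measurable

lemma klDiv_fst_prod_eq_add [StandardBorelSpace α] [Nonempty α] (ρ : Measure (α × β))
    (ν : Measure β) [IsProbabilityMeasure ρ] [IsFiniteMeasure ν] :
    InformationTheory.klDiv ρ (ρ.fst.prod ν) =
      InformationTheory.klDiv ρ.snd ν + InformationTheory.klDiv ρ (ρ.fst.prod ρ.snd) := by
  -- The chain rule applied to the disintegration of `ρ` over its second marginal.
  set ρ' : Measure (β × α) := ρ.map MeasurableEquiv.prodComm with hρ'
  have h_swap (ξ : Measure β) [IsFiniteMeasure ξ] :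
      InformationTheory.klDiv ρ (ρ.fst.prod ξ) =
        InformationTheory.klDiv (ρ.snd ⊗ₘ ρ'.condKernel) (ξ ⊗ₘ Kernel.const β ρ.fst) := by
    rw [← klDiv_map_measurableEquiv _ _ MeasurableEquiv.prodComm, ← hρ', Measure.compProd_const,
      ← Measure.fst_map_swap, show ρ.map Prod.swap = ρ' from rfl, ρ'.disintegrate]
    congr 1
    exact Measure.prod_swap
  rw [h_swap, h_swap, klDiv_compProd_eq_add]

lemma integral_sub_log_integral_exp_le_toReal_klDiv {μ ν : Measure α} [IsProbabilityMeasure μ]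
    [IsProbabilityMeasure ν] (h_kl : InformationTheory.klDiv μ ν ≠ ∞) {f : α → ℝ}
    (hfμ : Integrable f μ) (hfν : Integrable (fun x ↦ exp (f x)) ν) :
    ∫ x, f x ∂μ - log (∫ x, exp (f x) ∂ν) ≤ (InformationTheory.klDiv μ ν).toReal := by
  obtain ⟨h_ac, h_int⟩ := klDiv_ne_top_iff.1 h_kl
  have := isProbabilityMeasure_tilted hfν
  have h_gibbs := integral_llr_add_sub_measure_univ_nonneg
    (h_ac.trans (absolutelyContinuous_tilted hfν))
    (integrable_llr_tilted_right h_ac hfμ h_int hfν)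
  rw [integral_llr_tilted_right h_ac hfμ hfν h_int] at h_gibbs
  rw [toReal_klDiv_of_measure_eq h_ac (by simp)]
  simp only [probReal_univ] at h_gibbs
  linarith

lemma sq_integral_le_mul_toReal_klDiv {μ ν : Measure α} [IsProbabilityMeasure μ]
    [IsProbabilityMeasure ν] (h_kl : InformationTheory.klDiv μ ν ≠ ∞) {X : α → ℝ} {c : ℝ≥0}
    (hXμ : Integrable X μ) (hXν : HasSubgaussianMGF X c ν) :
    (∫ x, X x ∂μ) ^ 2 ≤ 2 * c * (InformationTheory.klDiv μ ν).toReal := by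
  have h_quad (t : ℝ) :
      0 ≤ c / 2 * (t * t) + -(∫ x, X x ∂μ) * t + (InformationTheory.klDiv μ ν).toReal := by
    have h_dv := integral_sub_log_integral_exp_le_toReal_klDiv h_kl (hXμ.const_mul t)
      (hXν.integrable_exp_mul t)
    have h_cgf : log (∫ x, exp (t * X x) ∂ν) ≤ c * t ^ 2 / 2 := hXν.cgf_le t
    rw [integral_const_mul] at h_dv
    linarith
  have h_discrim := discrim_le_zero h_quad
  rw [discrim] at h_discrim
  linarith

theorem two_mul_sq_measureReal_sub_le_klDiv (μ ν : Measure α) [IsProbabilityMeasure μ]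
    [IsProbabilityMeasure ν] {s : Set α} (hs : MeasurableSet s) :
    ENNReal.ofReal (2 * (μ.real s - ν.real s) ^ 2) ≤ InformationTheory.klDiv μ ν := by
  by_cases h_kl : InformationTheory.klDiv μ ν = ∞
  · simp [h_kl]
  have h_meas : Measurable (s.indicator (1 : α → ℝ)) := measurable_one.indicator hs
  have h_sub : HasSubgaussianMGF (fun x ↦ s.indicator (1 : α → ℝ) x - ν.real s)
      ((‖(1 : ℝ) - 0‖₊ / 2) ^ 2) ν := by
    rw [← integral_indicator_one hs]
    exact hasSubgaussianMGF_of_mem_Icc h_meas.aemeasurable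
      (ae_of_all ν fun x ↦ ⟨indicator_nonneg (by simp) x, indicator_le_self' (by simp) x⟩)
  have h_int : Integrable (s.indicator (1 : α → ℝ)) μ := (integrable_const 1).indicator hs
  have h_sq := sq_integral_le_mul_toReal_klDiv h_kl (h_int.sub (integrable_const _)) h_sub
  simp only [Pi.sub_apply] at h_sq
  rw [integral_sub h_int (integrable_const _), integral_indicator_one hs] at h_sq
  refine ENNReal.ofReal_le_of_le_toReal ?_
  norm_num at h_sq
  linarith

end KullbackLeibler

section ConditionalKullbackLeibler

variable {α β : Type*} [MeasurableSpace α] [MeasurableSpace β]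
  [MeasurableSpace.CountableOrCountablyGenerated α β] {μ : Measure α} {κ η : Kernel α β}

lemma rnDeriv_compProd_right [IsFiniteMeasure μ] [IsFiniteKernel κ] [IsFiniteKernel η]
    (h_ac : ∀ᵐ x ∂μ, κ x ≪ η x) :
    (μ ⊗ₘ κ).rnDeriv (μ ⊗ₘ η) =ᵐ[μ ⊗ₘ η] fun p ↦ κ.rnDeriv η p.1 p.2 := by
  have h_ae : κ =ᵐ[μ] η.withDensity (κ.rnDeriv η) := by
    filter_upwards [h_ac] with x hx using (Kernel.withDensity_rnDeriv_eq hx).symm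
  have h_density : μ ⊗ₘ κ = (μ ⊗ₘ η).withDensity fun p ↦ κ.rnDeriv η p.1 p.2 := by
    rw [Measure.compProd_congr h_ae, Measure.compProd_withDensity (by fun_prop)]
  rw [h_density]
  exact Measure.rnDeriv_withDensity _ (by fun_prop)

lemma klDiv_compProd_right_eq_lintegral [IsFiniteMeasure μ] [IsFiniteKernel κ] [IsFiniteKernel η]
    (h_ac : ∀ᵐ x ∂μ, κ x ≪ η x) :
    InformationTheory.klDiv (μ ⊗ₘ κ) (μ ⊗ₘ η) =
      ∫⁻ x, InformationTheory.klDiv (κ x) (η x) ∂μ := by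
  rw [klDiv_eq_lintegral_klFun_of_ac
    (Measure.absolutelyContinuous_compProd_right_iff.2 h_ac)]
  calc ∫⁻ p, ENNReal.ofReal
        (klFun ((μ ⊗ₘ κ).rnDeriv (μ ⊗ₘ η) p).toReal) ∂(μ ⊗ₘ η)
    _ = ∫⁻ p, ENNReal.ofReal (klFun (κ.rnDeriv η p.1 p.2).toReal)
          ∂(μ ⊗ₘ η) := by
      refine lintegral_congr_ae ?_
      filter_upwards [rnDeriv_compProd_right h_ac] with p hp
      rw [hp]
    _ = ∫⁻ x, ∫⁻ y, ENNReal.ofReal (klFun (κ.rnDeriv η x y).toReal)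
          ∂(η x) ∂μ := Measure.lintegral_compProd (by fun_prop)
    _ = ∫⁻ x, InformationTheory.klDiv (κ x) (η x) ∂μ := by
      refine lintegral_congr_ae ?_
      filter_upwards [h_ac] with x hx
      rw [klDiv_eq_lintegral_klFun_of_ac hx]
      refine lintegral_congr_ae ?_
      filter_upwards [Kernel.rnDeriv_eq_rnDeriv_measure (κ := κ) (η := η)] with y hy
      rw [hy]

end ConditionalKullbackLeibler

section Gaussian

lemma log_gaussianPDFReal (m : ℝ) {v : ℝ≥0} (hv : v ≠ 0) (x : ℝ) :
    log (gaussianPDFReal m v x) =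
      -(log (2 * Real.pi) + log v) / 2 - (x - m) ^ 2 / (2 * v) := by
  have hv' : (0 : ℝ) < v := by positivity
  rw [gaussianPDFReal, Real.log_mul (by positivity) (Real.exp_ne_zero _), Real.log_inv,
    Real.log_sqrt (by positivity), Real.log_exp, Real.log_mul (by positivity) hv'.ne']
  ring

lemma gaussianReal_absolutelyContinuous_gaussianReal (m m' : ℝ) {u v : ℝ≥0} (hu : u ≠ 0)
    (hv : v ≠ 0) :
    gaussianReal m u ≪ gaussianReal m' v :=
  (gaussianReal_absolutelyContinuous m hu).trans (gaussianReal_absolutelyContinuous' m' hv)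

lemma llr_gaussianReal (m m' : ℝ) {u v : ℝ≥0} (hu : u ≠ 0) (hv : v ≠ 0) :
    llr (gaussianReal m u) (gaussianReal m' v) =ᵐ[gaussianReal m u] fun x ↦
      log (v / u) / 2 - (x - m) ^ 2 / (2 * u) + (x - m') ^ 2 / (2 * v) := by
  have hu_ac := gaussianReal_absolutelyContinuous m hu
  have hv_ac := gaussianReal_absolutelyContinuous m' hv
  have h_ac := gaussianReal_absolutelyContinuous_gaussianReal m m' hu hv
  filter_upwards [h_ac (Measure.rnDeriv_eq_div hu_ac hv_ac), hu_ac (rnDeriv_gaussianReal m u),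
    hu_ac (rnDeriv_gaussianReal m' v)] with x hx hxu hxv
  rw [llr, hx, hxu, hxv, ENNReal.toReal_div, toReal_gaussianPDF, toReal_gaussianPDF,
    Real.log_div (gaussianPDFReal_pos m u x hu).ne' (gaussianPDFReal_pos m' v x hv).ne',
    log_gaussianPDFReal m hu, log_gaussianPDFReal m' hv,
    Real.log_div (NNReal.coe_ne_zero.2 hv) (NNReal.coe_ne_zero.2 hu)]
  ring

lemma integrable_sq_sub_gaussianReal (m a : ℝ) (v : ℝ≥0) :
    Integrable (fun x ↦ (x - a) ^ 2) (gaussianReal m v) :=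
  ((memLp_id_gaussianReal 2).sub (memLp_const a)).integrable_sq

lemma integral_sq_sub_gaussianReal (m a : ℝ) (v : ℝ≥0) :
    ∫ x, (x - a) ^ 2 ∂(gaussianReal m v) = v + (m - a) ^ 2 := by
  have h_memLp : MemLp (fun x ↦ x) 2 (gaussianReal m v) := memLp_id_gaussianReal 2
  have h_var := variance_eq_sub (h_memLp.sub (memLp_const a))
  simp only [Pi.sub_def, Pi.pow_apply] at h_var
  rw [variance_sub_const (by fun_prop), variance_fun_id_gaussianReal,
    integral_sub (h_memLp.integrable one_le_two) (integrable_const a),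
    integral_id_gaussianReal] at h_var
  simp only [integral_const, probReal_univ, one_smul] at h_var
  linarith

lemma klDiv_gaussianReal (m m' : ℝ) {u v : ℝ≥0} (hu : u ≠ 0) (hv : v ≠ 0) :
    InformationTheory.klDiv (gaussianReal m u) (gaussianReal m' v) =
      ENNReal.ofReal ((log (v / u) + (u + (m - m') ^ 2) / v - 1) / 2) := by
  have h_llr := llr_gaussianReal m m' hu hv
  have hm := (integrable_sq_sub_gaussianReal m m u).div_const (2 * u)
  have hm' := (integrable_sq_sub_gaussianReal m m' u).div_const (2 * v)
  have h_diff : Integrable (fun x ↦ log (v / u) / 2 - (x - m) ^ 2 / (2 * u))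
      (gaussianReal m u) := (integrable_const _).sub hm
  rw [klDiv_of_ac_of_integrable
    (gaussianReal_absolutelyContinuous_gaussianReal m m' hu hv)
    ((h_diff.add hm').congr h_llr.symm), integral_congr_ae h_llr, integral_add h_diff hm',
    integral_sub (integrable_const _) hm, integral_div (2 * (u : ℝ)), integral_div (2 * (v : ℝ)),
    integral_sq_sub_gaussianReal, integral_sq_sub_gaussianReal]
  simp only [integral_const, probReal_univ, one_smul, add_sub_cancel_right, sub_self]
  congr 1
  have : (u : ℝ) ≠ 0 := NNReal.coe_ne_zero.2 hu
  field_simp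
  ring

end Gaussian

section Channel

/-- The transition kernel `x ↦ N(x, 1)` of the additive white Gaussian noise channel, which sends
an input `x` to the law of the output `x + Z`. -/
noncomputable def gaussianChannel : Kernel ℝ ℝ where
  toFun x := gaussianReal x 1
  measurable' := measurable_gaussianReal.comp (measurable_id.prodMk measurable_const)

instance : IsMarkovKernel gaussianChannel :=
  ⟨fun x ↦ inferInstanceAs (IsProbabilityMeasure (gaussianReal x 1))⟩

@[simp]
lemma gaussianChannel_apply (x : ℝ) : gaussianChannel x = gaussianReal x 1 := rfl

variable (μ : Measure ℝ)

lemma jointLaw_eq_compProd [SFinite μ] : jointLaw μ = μ ⊗ₘ gaussianChannel := by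
  ext s hs
  rw [jointLaw, Measure.map_apply (by fun_prop) hs, Measure.compProd_apply hs,
    Measure.prod_apply ((by fun_prop : Measurable fun p : ℝ × ℝ ↦ (p.1, p.1 + p.2)) hs)]
  refine lintegral_congr fun x ↦ ?_
  have h_shift : gaussianReal x 1 = (gaussianReal 0 1).map (x + ·) := by
    rw [gaussianReal_map_const_add, zero_add]
  rw [gaussianChannel_apply, h_shift, Measure.map_apply (by fun_prop) (measurable_prodMk_left hs)]
  rfl

instance [IsProbabilityMeasure μ] : IsProbabilityMeasure (jointLaw μ) := by
  rw [jointLaw_eq_compProd]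
  infer_instance

lemma fst_jointLaw [SFinite μ] : (jointLaw μ).fst = μ := by
  rw [jointLaw_eq_compProd, Measure.fst_compProd]

end Channel

section MutualInformation

variable {μ : Measure ℝ} [IsProbabilityMeasure μ]

lemma klDiv_jointLaw_prod_gaussianReal (h_sq : Integrable (fun x ↦ x ^ 2) μ) {v : ℝ≥0}
    (hv : v ≠ 0) :
    InformationTheory.klDiv (jointLaw μ) (μ.prod (gaussianReal 0 v)) =
      ENNReal.ofReal ((log v + (1 + ∫ x, x ^ 2 ∂μ) / v - 1) / 2) := by
  have h_kl (x : ℝ) : InformationTheory.klDiv (gaussianChannel x)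
      (Kernel.const ℝ (gaussianReal 0 v) x) =
      ENNReal.ofReal ((log v + (1 + x ^ 2) / v - 1) / 2) := by
    simpa using klDiv_gaussianReal x 0 one_ne_zero hv
  have h_nonneg (x : ℝ) : 0 ≤ (log v + (1 + x ^ 2) / v - 1) / 2 := by
    have h_log := Real.one_sub_inv_le_log_of_pos (NNReal.coe_pos.2 hv.bot_lt)
    have : 0 ≤ x ^ 2 / (v : ℝ) := by positivity
    rw [add_div, one_div]
    linarith
  have h_int : Integrable (fun x ↦ (1 + x ^ 2) / (v : ℝ)) μ :=
    ((integrable_const 1).add h_sq).div_const _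
  have h_sum : Integrable (fun x ↦ log v + (1 + x ^ 2) / v) μ :=
    (integrable_const _).add h_int
  have h_kl_int : Integrable (fun x ↦ (log v + (1 + x ^ 2) / v - 1) / 2) μ :=
    (h_sum.sub (integrable_const 1)).div_const 2
  have h_ac : ∀ᵐ x ∂μ, gaussianChannel x ≪ Kernel.const ℝ (gaussianReal 0 v) x :=
    ae_of_all μ fun x ↦ gaussianReal_absolutelyContinuous_gaussianReal x 0 one_ne_zero hv
  rw [jointLaw_eq_compProd, ← Measure.compProd_const, klDiv_compProd_right_eq_lintegral h_ac]
  simp only [h_kl]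
  rw [← ofReal_integral_eq_lintegral_ofReal h_kl_int (ae_of_all μ h_nonneg), integral_div,
    integral_sub h_sum (integrable_const 1), integral_add (integrable_const _) h_int, integral_div,
    integral_add (integrable_const 1) h_sq]
  simp only [integral_const, probReal_univ, one_smul]

theorem mutInfo_le_sub_two_mul_sq (h_sq : Integrable (fun x ↦ x ^ 2) μ) {p : ℝ≥0}
    (h_pow : ∫ x, x ^ 2 ∂μ ≤ p) {s : Set ℝ} (hs : MeasurableSet s) :
    mutInfo μ ≤ ((1 / 2 * log (1 + p) -
      2 * ((jointLaw μ).snd.real s - (gaussianReal 0 (1 + p)).real s) ^ 2 : ℝ) : EReal) := by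
  set d := (jointLaw μ).snd.real s - (gaussianReal 0 (1 + p)).real s
  have h_total : ENNReal.ofReal (2 * d ^ 2) +
      InformationTheory.klDiv (jointLaw μ) ((jointLaw μ).fst.prod (jointLaw μ).snd) ≤
        ENNReal.ofReal (1 / 2 * log (1 + p)) := by
    calc _ ≤ InformationTheory.klDiv (jointLaw μ).snd (gaussianReal 0 (1 + p)) + _ := by
          gcongr
          exact two_mul_sq_measureReal_sub_le_klDiv _ _ hs
      _ = ENNReal.ofReal ((log (1 + p) + (1 + ∫ x, x ^ 2 ∂μ) / (1 + p) - 1) / 2) := by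
          rw [← klDiv_fst_prod_eq_add, fst_jointLaw,
            klDiv_jointLaw_prod_gaussianReal h_sq (by positivity), NNReal.coe_add, NNReal.coe_one]
      _ ≤ ENNReal.ofReal (1 / 2 * log (1 + p)) := by
          have : (1 + ∫ x, x ^ 2 ∂μ) / (1 + p) ≤ 1 :=
            div_le_one_of_le₀ (by linarith) (by positivity)
          gcongr
          linarith
  have h_log : 0 ≤ log (1 + p) := Real.log_nonneg (le_add_of_nonneg_right p.2)
  have h_gap : 2 * d ^ 2 ≤ 1 / 2 * log (1 + p) :=
    (ENNReal.ofReal_le_ofReal_iff (by positivity)).1 (le_self_add.trans h_total)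
  rw [mutInfo, klDiv_eq_coe_klDiv (by simp)]
  calc _ ≤ ((ENNReal.ofReal (1 / 2 * log (1 + p) - 2 * d ^ 2) : ℝ≥0∞) : EReal) := by
        rw [ENNReal.ofReal_sub _ (by positivity), EReal.coe_ennreal_le_coe_ennreal_iff]
        exact ENNReal.le_sub_of_add_le_left ENNReal.ofReal_ne_top h_total
    _ = _ := by rw [EReal.coe_ennreal_ofReal, max_eq_left (sub_nonneg.2 h_gap)]

end MutualInformation

section StandardGaussian

lemma stdPhi_eq_gaussianPDFReal (y : ℝ) : stdPhi y = gaussianPDFReal 0 1 y := by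
  simp [stdPhi, gaussianPDFReal, div_eq_inv_mul]

lemma stdPhi_nonneg (y : ℝ) : 0 ≤ stdPhi y :=
  div_nonneg (Real.exp_nonneg _) (Real.sqrt_nonneg _)

lemma stdPhi_le_of_abs_le {y t : ℝ} (h : |y| ≤ |t|) : stdPhi t ≤ stdPhi y := by
  have := sq_le_sq.2 h
  unfold stdPhi
  gcongr

lemma stdPhi_mul_volume_le_gaussianReal {t : ℝ} {s : Set ℝ} (hs : MeasurableSet s)
    (hst : s ⊆ Icc (-t) t) : stdPhi t * volume.real s ≤ (gaussianReal 0 1).real s := by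
  have h_ne_top : volume s ≠ ∞ := measure_ne_top_of_subset hst measure_Icc_lt_top.ne
  rw [measureReal_def (gaussianReal 0 1), gaussianReal_apply_eq_integral _ one_ne_zero,
    ENNReal.toReal_ofReal (integral_nonneg (gaussianPDFReal_nonneg 0 1))]
  refine setIntegral_ge_of_const_le_real hs h_ne_top (fun y hy ↦ ?_)
    (integrable_gaussianPDFReal 0 1).integrableOn
  rw [← stdPhi_eq_gaussianPDFReal]
  exact stdPhi_le_of_abs_le ((abs_le.2 (hst hy)).trans (le_abs_self t))

lemma mul_stdPhi_le_gaussianReal_real_Icc_sub {s t : ℝ} (hs : 0 ≤ s) (hst : s ≤ t) :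
    2 * (t - s) * stdPhi t ≤
      (gaussianReal 0 1).real (Icc (-t) t) - (gaussianReal 0 1).real (Icc (-s) s) := by
  have h_sub : Icc (-s) s ⊆ Icc (-t) t := Icc_subset_Icc (neg_le_neg hst) hst
  have h_vol : volume.real (Icc (-t) t \ Icc (-s) s) = 2 * (t - s) := by
    rw [measureReal_sdiff h_sub measurableSet_Icc measure_Icc_lt_top.ne,
      Real.volume_real_Icc_of_le (by linarith), Real.volume_real_Icc_of_le (by linarith)]
    ring
  rw [← measureReal_sdiff h_sub measurableSet_Icc, ← h_vol, mul_comm]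
  exact stdPhi_mul_volume_le_gaussianReal (measurableSet_Icc.diff measurableSet_Icc)
    sdiff_subset

lemma gaussianReal_real_Icc_sqrt_mul {v : ℝ≥0} (hv : v ≠ 0) (s : ℝ) :
    (gaussianReal 0 v).real (Icc (-(√v * s)) (√v * s)) =
      (gaussianReal 0 1).real (Icc (-s) s) := by
  have h_pos : 0 < √(v : ℝ) := Real.sqrt_pos.2 (NNReal.coe_pos.2 hv.bot_lt)
  have h_scale : gaussianReal 0 v = (gaussianReal 0 1).map (√(v : ℝ) * ·) := by
    rw [gaussianReal_map_const_mul]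
    congr 1
    · simp
    · ext; simp
  rw [h_scale, map_measureReal_apply (by fun_prop) measurableSet_Icc,
    preimage_const_mul_Icc₀ _ _ h_pos]
  congr 2 <;> field_simp

end StandardGaussian

section Capacity

variable {μ : Measure ℝ} [IsProbabilityMeasure μ] {A P : ℝ}

lemma gaussianReal_real_Icc_le_snd_jointLaw (hμ : ∀ᵐ x ∂μ, |x| ≤ A) (t : ℝ) :
    (gaussianReal 0 1).real (Icc (-t) t) ≤
      (jointLaw μ).snd.real (Icc (-(t + A)) (t + A)) := by
  calc (gaussianReal 0 1).real (Icc (-t) t)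
      = (μ.prod (gaussianReal 0 1)).real (Prod.snd ⁻¹' Icc (-t) t) := by
        rw [← map_measureReal_apply measurable_snd measurableSet_Icc, Measure.map_snd_prod]
        simp
    _ ≤ (μ.prod (gaussianReal 0 1)).real
          ((fun p ↦ p.1 + p.2) ⁻¹' Icc (-(t + A)) (t + A)) := by
        refine ENNReal.toReal_mono (measure_ne_top _ _) (measure_mono_ae ?_)
        filter_upwards [Measure.quasiMeasurePreserving_fst.ae hμ] with p hp hp_snd
        have := abs_le.1 (hp : |p.1| ≤ A)
        exact ⟨by linarith [hp_snd.1], by linarith [hp_snd.2]⟩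
    _ = (jointLaw μ).snd.real (Icc (-(t + A)) (t + A)) := by
        rw [jointLaw, Measure.snd_map_prodMk measurable_fst,
          map_measureReal_apply (by fun_prop) measurableSet_Icc]

theorem mutInfo_le_of_ae_abs_le {s t : ℝ} {p : ℝ≥0} (h_amp : ∀ᵐ x ∂μ, |x| ≤ A)
    (h_pow : ∫ x, x ^ 2 ∂μ ≤ p) (hs : 0 ≤ s) (hst : s ≤ t) (h_scale : √(1 + p) * s = t + A) :
    mutInfo μ ≤ ((1 / 2 * log (1 + p) - 8 * (t - s) ^ 2 * stdPhi t ^ 2 : ℝ) : EReal) := by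
  have h_sq : Integrable (fun x ↦ x ^ 2) μ :=
    (MemLp.of_bound aestronglyMeasurable_id A h_amp : MemLp id 2 μ).integrable_sq
  have h_gap : 2 * (t - s) * stdPhi t ≤ (jointLaw μ).snd.real (Icc (-(t + A)) (t + A)) -
      (gaussianReal 0 (1 + p)).real (Icc (-(t + A)) (t + A)) := by
    have h_scaled := gaussianReal_real_Icc_sqrt_mul (v := 1 + p) (by positivity) s
    rw [NNReal.coe_add, NNReal.coe_one, h_scale] at h_scaled
    rw [h_scaled]
    exact (mul_stdPhi_le_gaussianReal_real_Icc_sub hs hst).trans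
      (sub_le_sub_right (gaussianReal_real_Icc_le_snd_jointLaw h_amp t) _)
  have h_gap_sq := pow_le_pow_left₀
    (mul_nonneg (mul_nonneg zero_le_two (sub_nonneg.2 hst)) (stdPhi_nonneg t)) h_gap 2
  refine (mutInfo_le_sub_two_mul_sq h_sq h_pow (s := Icc (-(t + A)) (t + A))
    measurableSet_Icc).trans (EReal.coe_le_coe ?_)
  linarith

theorem mul_sq_stdPhi_le_half_log_sub_CAP {s t : ℝ} (hP : 0 ≤ P) (hs : 0 ≤ s) (hst : s ≤ t)
    (h_scale : √(1 + P) * s = t + A) :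
    ((8 * (t - s) ^ 2 * stdPhi t ^ 2 : ℝ) : EReal) ≤
      ((1 / 2 * log (1 + P) : ℝ) : EReal) - CAP A P := by
  lift P to ℝ≥0 using hP
  have h_cap : CAP A P ≤
      ((1 / 2 * log (1 + P) - 8 * (t - s) ^ 2 * stdPhi t ^ 2 : ℝ) : EReal) := by
    refine iSup₂_le fun μ ⟨_, h_amp, h_pow⟩ ↦ ?_
    have h_bdd : ∀ᵐ x ∂μ, |x| ≤ A := by simpa only [ae_iff, not_le] using h_amp
    exact mutInfo_le_of_ae_abs_le h_bdd h_pow hs hst h_scale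
  refine le_trans (le_of_eq ?_) (EReal.sub_le_sub le_rfl h_cap)
  rw [← EReal.coe_sub, sub_sub_cancel]

end Capacity

section OptimalRadii

/-- The half-width `t` of the noise interval `[-t, t]` for which the mass difference between
`[-t, t]` and `[-s, s]` with `σs = t + A` is largest; `σ` stands for `√(1 + P)` and `A₁` for
`√(A² + P ln(1 + P))`. -/
noncomputable def outerRadius (A A₁ P σ : ℝ) : ℝ := σ * A₁ / P + A / P

/-- The half-width `s` that goes with `t = outerRadius A A₁ P σ`. Differentiating the mass
difference gives `φ(s) = σφ(t)`, that is `t² - s² = ln(1 + P)`, whose solution under `σs = t + A`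
is this pair. -/
noncomputable def innerRadius (A A₁ P σ : ℝ) : ℝ := (σ * A + A₁) / P

variable {A A₁ P σ : ℝ}

lemma mul_innerRadius (hP : P ≠ 0) (hσ : σ ^ 2 = 1 + P) :
    σ * innerRadius A A₁ P σ = outerRadius A A₁ P σ + A := by
  rw [innerRadius, outerRadius]
  field_simp
  linear_combination A * hσ

lemma outerRadius_sub_innerRadius {L : ℝ} (hP : P ≠ 0) (hA : A + A₁ ≠ 0)
    (hA₁ : A₁ ^ 2 = A ^ 2 + P * L) :
    outerRadius A A₁ P σ - innerRadius A A₁ P σ = (σ - 1) * L / (A + A₁) := by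
  rw [innerRadius, outerRadius]
  field_simp
  linear_combination (σ - 1) * hA₁

end OptimalRadii

/-- Non-asymptotic converse bound for the amplitude-constrained capacity:
for all `A, P > 0`, with `A₁ = √(A² + P ln(1+P))`,
`(1/2)ln(1+P) - C(A,P) ≥ 8 ((√(1+P)-1) ln(1+P)/(A+A₁))² φ(√(1+P) A₁/P + A/P)²`. -/
theorem smith_capacity_nonasymptotic_converse
    (A P : ℝ) (hA : 0 < A) (hP : 0 < P)
    (A₁ : ℝ) (hA₁ : A₁ = Real.sqrt (A ^ 2 + P * Real.log (1 + P))) :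
    ((8 * ((Real.sqrt (1 + P) - 1) * Real.log (1 + P) / (A + A₁)) ^ 2
        * stdPhi (Real.sqrt (1 + P) * A₁ / P + A / P) ^ 2 : ℝ) : EReal) ≤
      (((1 / 2) * Real.log (1 + P) : ℝ) : EReal) - CAP A P := by
  have h_log : 0 ≤ Real.log (1 + P) := Real.log_nonneg (by linarith)
  have hσ : Real.sqrt (1 + P) ^ 2 = 1 + P := Real.sq_sqrt (by positivity)
  have h_one_le : 1 ≤ Real.sqrt (1 + P) := Real.one_le_sqrt.2 (by linarith)
  have hA₁_nonneg : 0 ≤ A₁ := hA₁ ▸ Real.sqrt_nonneg _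
  have hA₁_sq : A₁ ^ 2 = A ^ 2 + P * Real.log (1 + P) := by
    rw [hA₁, Real.sq_sqrt (by positivity)]
  have h_width := outerRadius_sub_innerRadius (σ := Real.sqrt (1 + P)) hP.ne'
    (by positivity) hA₁_sq
  have h_inner_nonneg : 0 ≤ innerRadius A A₁ P (Real.sqrt (1 + P)) := by
    rw [innerRadius]
    positivity
  have h_inner_le : innerRadius A A₁ P (Real.sqrt (1 + P)) ≤
      outerRadius A A₁ P (Real.sqrt (1 + P)) := by
    rw [← sub_nonneg, h_width]
    have := sub_nonneg.2 h_one_le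
    positivity
  rw [← h_width]
  exact mul_sq_stdPhi_le_half_log_sub_CAP hP.le h_inner_nonneg h_inner_le
    (mul_innerRadius hP.ne' hσ)
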